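/- Let n ≥ 3, R > 0, and let φ be a harmonic function on Ω_R = {x ∈ ℝⁿ : |x| ≥ R} (i.e. Δφ = 0). Suppose there exist u^∞ ∈ ℝⁿ and constants C > 0, σ > 0 such that |∇φ(x) − u^∞| ≤ C|x|^{−1−σ} for all x ∈ Ω_R. Then there exist R' ≥ R and C₀ > 0 such that |∇φ(x) − u^∞| ≤ C₀ |x|^{−n+1} for all x ∈ Ω_{R'}. -/

import Mathlib

/-!
Put `ψ = φ - ⟪uinf, ·⟫`, a harmonic function with `‖∇ψ‖ ≤ C ‖x‖ ^ (-1 - σ)`. Integrating this bound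
along rays and along chords of spheres shows that `ψ` has a limit `c` at infinity
(`exists_limit`). On `{2 R ≤ ‖x‖}` the harmonic function `h = ψ - c`, which tends to `0`, is compared
with a multiple of the fundamental solution `‖x‖ ^ (2 - n)`, giving `h = O(‖x‖ ^ (2 - n))`
(`le_fundamental`). The interior gradient estimate `|∂ᵢ h (x)| ≤ (n / d) sup |h|` on the ball of
radius `d = ‖x‖ / 2` about `x` (`slope_le_of_harmonic`) gains one more power of `‖x‖`.

Both the comparison and the gradient estimate rest only on the weak maximum principle
(`nonpos_of_hasLap`); neither mean value formulas nor integration over spheres are needed. The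
Laplacian is handled through one-dimensional slices along the coordinate axes (`HasD2`, `HasLap`),
a notion stable under sums, translations and coordinate reflections.
-/


open scoped BigOperators RealInnerProductSpace

/-- Second partial derivative `∂_{x_i} ∂_{x_j} f` on Euclidean space. -/
noncomputable def pdd {n : ℕ} (f : EuclideanSpace ℝ (Fin n) → ℝ) (i j : Fin n)
    (x : EuclideanSpace ℝ (Fin n)) : ℝ :=
  fderiv ℝ (fun y => gradient f y j) x (EuclideanSpace.single i 1)


open Filter Topology Set

/-! ### Directional second derivatives and the maximum principle -/

/-- `f` is twice differentiable at `x` in the direction `v`, with second directional derivative `a`: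
the slice `t ↦ f (x + t v)` is differentiable near `0` and its derivative has derivative `a` at `0`. -/
def HasD2 {n : ℕ} (f : EuclideanSpace ℝ (Fin n) → ℝ) (x v : EuclideanSpace ℝ (Fin n)) (a : ℝ) :
    Prop :=
  ∃ g : ℝ → ℝ, (∀ᶠ t in 𝓝 (0 : ℝ), HasDerivAt (fun s : ℝ => f (x + s • v)) (g t) t) ∧
    HasDerivAt g a 0

/-- `f` has Laplacian `L` at `x`, as the sum of the second directional derivatives along the
coordinate axes. Only slices are involved, so no joint regularity of `f` is encoded. -/
def HasLap {n : ℕ} (f : EuclideanSpace ℝ (Fin n) → ℝ) (x : EuclideanSpace ℝ (Fin n)) (L : ℝ) :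
    Prop :=
  ∃ a : Fin n → ℝ, (∀ i, HasD2 f x (EuclideanSpace.single i 1) (a i)) ∧ ∑ i, a i = L

section Slices

variable {n : ℕ} {f f₁ f₂ : EuclideanSpace ℝ (Fin n) → ℝ} {x v : EuclideanSpace ℝ (Fin n)}
  {a b : ℝ}

lemma HasD2.add (h₁ : HasD2 f₁ x v a) (h₂ : HasD2 f₂ x v b) :
    HasD2 (fun y => f₁ y + f₂ y) x v (a + b) := by
  obtain ⟨g, hg, hg'⟩ := h₁
  obtain ⟨k, hk, hk'⟩ := h₂
  refine ⟨fun t => g t + k t, ?_, hg'.add hk'⟩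
  filter_upwards [hg, hk] with t h1 h2 using h1.add h2

lemma HasD2.const_mul (c : ℝ) (h₁ : HasD2 f x v a) :
    HasD2 (fun y => c * f y) x v (c * a) := by
  obtain ⟨g, hg, hg'⟩ := h₁
  refine ⟨fun t => c * g t, ?_, hg'.const_mul c⟩
  filter_upwards [hg] with t h1 using h1.const_mul c

lemma HasD2.neg_dir (h : HasD2 f x v a) : HasD2 f x (-v) a := by
  obtain ⟨g, hg, hg'⟩ := h
  have hneg : Tendsto (fun t : ℝ => -t) (𝓝 0) (𝓝 0) := by
    simpa using (continuous_neg.tendsto (0 : ℝ))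
  refine ⟨fun t => -g (-t), ?_, ?_⟩
  · filter_upwards [hneg.eventually hg] with t ht
    have := ht.scomp t (hasDerivAt_neg t)
    simpa [Function.comp_def] using this
  · have h0 : HasDerivAt g a (-0) := by simpa using hg'
    have := (h0.scomp (0 : ℝ) (hasDerivAt_neg 0)).neg
    exact this.congr_deriv (by simp)

/-- A function that is quadratic along the line through `x` in direction `v`. -/
lemma HasD2.of_quadratic (p q r : ℝ) (h : ∀ t : ℝ, f (x + t • v) = p + q * t + r * t ^ 2) :
    HasD2 f x v (2 * r) := by
  refine ⟨fun t => q + 2 * r * t, Eventually.of_forall fun t => ?_, ?_⟩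
  · simp only [h]
    have := (((hasDerivAt_id t).const_mul q).const_add p).add
      (((hasDerivAt_id t).pow 2).const_mul r)
    exact this.congr_deriv (by norm_num; ring)
  · simpa using ((hasDerivAt_id (0 : ℝ)).const_mul (2 * r)).const_add q

variable {L M : ℝ}

lemma HasLap.add (h₁ : HasLap f₁ x L) (h₂ : HasLap f₂ x M) :
    HasLap (fun y => f₁ y + f₂ y) x (L + M) := by
  obtain ⟨a, ha, rfl⟩ := h₁
  obtain ⟨b, hb, rfl⟩ := h₂
  exact ⟨fun i => a i + b i, fun i => (ha i).add (hb i), Finset.sum_add_distrib⟩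

lemma HasLap.const_mul (c : ℝ) (h : HasLap f x L) : HasLap (fun y => c * f y) x (c * L) := by
  obtain ⟨a, ha, rfl⟩ := h
  exact ⟨fun i => c * a i, fun i => (ha i).const_mul c, by rw [Finset.mul_sum]⟩

lemma HasLap.const (c : ℝ) : HasLap (fun _ => c) x 0 :=
  ⟨fun _ => 2 * 0, fun _ => HasD2.of_quadratic c 0 0 (by simp), by simp⟩

lemma HasLap.translate (p : EuclideanSpace ℝ (Fin n)) (h : HasLap f (p + x) L) :
    HasLap (fun y => f (p + y)) x L := by
  obtain ⟨a, ha, rfl⟩ := h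
  refine ⟨a, fun i => ?_, rfl⟩
  obtain ⟨g, hg, hg'⟩ := ha i
  exact ⟨g, by simpa only [add_assoc] using hg, hg'⟩

/-- The Laplacian is invariant under reflection in a coordinate hyperplane. -/
lemma HasLap.reflect (i : Fin n) (h : HasLap f (x - (2 * x i) • EuclideanSpace.single i 1) L) :
    HasLap (fun y => f (y - (2 * y i) • EuclideanSpace.single i 1)) x L := by
  obtain ⟨a, ha, rfl⟩ := h
  refine ⟨a, fun j => ?_, rfl⟩
  by_cases hij : j = i
  · subst hij
    obtain ⟨g, hg, hg'⟩ := (ha j).neg_dir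
    refine ⟨g, ?_, hg'⟩
    have e : ∀ s : ℝ, x + s • EuclideanSpace.single j (1 : ℝ)
          - (2 * (x + s • EuclideanSpace.single j (1 : ℝ)) j) • EuclideanSpace.single j (1 : ℝ)
        = x - (2 * x j) • EuclideanSpace.single j 1 + s • -EuclideanSpace.single j (1 : ℝ) := by
      intro s
      simp only [PiLp.add_apply, PiLp.smul_apply, PiLp.single_apply, if_true,
        smul_eq_mul, mul_one]
      module
    simpa only [e] using hg
  · obtain ⟨g, hg, hg'⟩ := ha j
    refine ⟨g, ?_, hg'⟩
    have e : ∀ s : ℝ, x + s • EuclideanSpace.single j (1 : ℝ)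
          - (2 * (x + s • EuclideanSpace.single j (1 : ℝ)) i) • EuclideanSpace.single i (1 : ℝ)
        = x - (2 * x i) • EuclideanSpace.single i 1 + s • EuclideanSpace.single j (1 : ℝ) := by
      intro s
      simp only [PiLp.add_apply, PiLp.smul_apply, PiLp.single_apply, if_neg (Ne.symm hij),
        smul_eq_mul, mul_zero, add_zero]
      module
    simpa only [e] using hg

lemma norm_add_smul_single_sq (x : EuclideanSpace ℝ (Fin n)) (i : Fin n) (t : ℝ) :
    ‖x + t • EuclideanSpace.single i (1 : ℝ)‖ ^ 2 = ‖x‖ ^ 2 + 2 * x i * t + t ^ 2 := by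
  rw [norm_add_sq_real, real_inner_smul_right, EuclideanSpace.inner_single_right, norm_smul]
  simp
  ring

lemma HasLap.norm_sq : HasLap (fun y => ‖y‖ ^ 2) x (2 * n) :=
  ⟨fun _ => 2 * 1, fun i => HasD2.of_quadratic (‖x‖ ^ 2) (2 * x i) 1 fun t => by
    rw [norm_add_smul_single_sq]; ring, by simp; ring⟩

lemma HasLap.coord_quadratic (i : Fin n) (b c : ℝ) :
    HasLap (fun y => b * y i + c * y i ^ 2) x (2 * c) := by
  refine ⟨fun j => 2 * (if j = i then c else 0), fun j => ?_, by simp⟩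
  refine HasD2.of_quadratic (b * x i + c * x i ^ 2)
    (if j = i then b + 2 * c * x i else 0) _ fun t => ?_
  by_cases hij : j = i
  · subst hij
    simp
    ring
  · simp [hij, Ne.symm hij]

/-- Second derivative test: a positive second derivative forbids a local maximum. -/
lemma HasD2.nonpos_of_isLocalMax (h : HasD2 f x v a) (hmax : IsLocalMax f x) : a ≤ 0 := by
  by_contra! ha
  obtain ⟨g, hg, hg'⟩ := h
  set k : ℝ → ℝ := fun s => f (x + s • v) with hk
  have hlm : IsLocalMax k 0 := by
    have : Tendsto (fun s : ℝ => x + s • v) (𝓝 0) (𝓝 x) := by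
      have hc : Continuous (fun s : ℝ => x + s • v) := by fun_prop
      simpa using hc.tendsto 0
    have h2 := this.eventually hmax
    filter_upwards [h2] with s hs
    simpa [hk] using hs
  have hd : deriv k =ᶠ[𝓝 0] g := hg.mono fun t ht => ht.deriv
  have hdd : deriv (deriv k) 0 = a := by rw [hd.deriv_eq, hg'.deriv]
  have hmin : IsLocalMin k 0 :=
    isLocalMin_of_deriv_deriv_pos (by rw [hdd]; exact ha) hlm.deriv_eq_zero
      hg.self_of_nhds.continuousAt
  -- A point that is both a local maximum and a local minimum makes the slice locally constant.
  have hconst : k =ᶠ[𝓝 0] fun _ => k 0 := by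
    filter_upwards [hlm, hmin] with s h1 h2 using le_antisymm h1 h2
  have : deriv (deriv k) 0 = 0 := by
    rw [hconst.deriv.deriv_eq]; simp
  linarith

/-- Weak maximum principle on a compact set, the boundary being the points where `f ≤ 0` is known. -/
lemma nonpos_of_hasLap {K : Set (EuclideanSpace ℝ (Fin n))} (hn : 0 < n) (hK : IsCompact K)
    (hf : ContinuousOn f K)
    (h : ∀ x ∈ K, f x ≤ 0 ∨ (K ∈ 𝓝 x ∧ HasLap f x 0)) : ∀ x ∈ K, f x ≤ 0 := by
  intro x hx
  obtain ⟨B, hB⟩ := hK.exists_bound_of_continuousOn (f := fun y => ‖y‖ ^ 2) (by fun_prop)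
  have hBK : ∀ y ∈ K, ‖y‖ ^ 2 ≤ B := fun y hy => (le_abs_self _).trans (hB y hy)
  have hB0 : 0 ≤ B := (sq_nonneg _).trans (hBK x hx)
  -- Adding `ε ‖y‖ ^ 2` makes the Laplacian strictly positive.
  have key : ∀ ε > 0, f x ≤ ε * B := by
    intro ε hε
    obtain ⟨z, hz, hzmax⟩ := hK.exists_isMaxOn ⟨x, hx⟩
      (f := fun y => f y + ε * ‖y‖ ^ 2) (by fun_prop)
    have h1 : f x + ε * ‖x‖ ^ 2 ≤ f z + ε * ‖z‖ ^ 2 := hzmax hx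
    rcases h z hz with hz0 | ⟨hnhds, hlap⟩
    · nlinarith [hBK z hz, mul_nonneg hε.le (sq_nonneg ‖x‖),
        mul_le_mul_of_nonneg_left (hBK z hz) hε.le]
    · exfalso
      obtain ⟨a, ha, hsum⟩ := hlap.add (HasLap.norm_sq.const_mul ε)
      have hle : ∑ i, a i ≤ 0 := Finset.sum_nonpos fun i _ =>
        (ha i).nonpos_of_isLocalMax (hzmax.isLocalMax hnhds)
      have : (0 : ℝ) < n := by exact_mod_cast hn
      have : 0 < ε * (2 * n) := by positivity
      linarith
  refine le_of_forall_pos_le_add fun δ hδ => ?_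
  refine (key (δ / (B + 1)) (by positivity)).trans ?_
  rw [zero_add, div_mul_eq_mul_div, div_le_iff₀ (by positivity)]
  nlinarith

end Slices

/-! ### Interior gradient estimate -/

/-- Interior gradient estimate. The odd part of `h` across the hyperplane through `p` orthogonal to
the `i`-th axis vanishes on that hyperplane, and on the half ball it lies below the harmonic
quadratic barrier `M / d ^ 2 * (‖y‖ ^ 2 + n * d * y i - n * y i ^ 2)`, whose slope at `0`
is `n * M / d`. -/
lemma slope_le_of_harmonic {n : ℕ} (hn : 0 < n) {h : EuclideanSpace ℝ (Fin n) → ℝ}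
    {p : EuclideanSpace ℝ (Fin n)} {d M D : ℝ} (hd : 0 < d) (i : Fin n)
    (hcont : ContinuousOn h (Metric.closedBall p d))
    (hlap : ∀ x ∈ Metric.ball p d, HasLap h x 0)
    (hM : ∀ x ∈ Metric.closedBall p d, |h x| ≤ M)
    (hD : HasDerivAt (fun t : ℝ => h (p + t • EuclideanSpace.single i 1)) D 0) :
    D ≤ n * M / d := by
  have hM0 : 0 ≤ M := (abs_nonneg _).trans (hM p (by simp [hd.le]))
  have hn1 : (1 : ℝ) ≤ n := by exact_mod_cast hn
  set e : EuclideanSpace ℝ (Fin n) := EuclideanSpace.single i 1 with he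
  set S : EuclideanSpace ℝ (Fin n) → EuclideanSpace ℝ (Fin n) := fun y => y - (2 * y i) • e with hS
  have hSnorm : ∀ y, ‖S y‖ = ‖y‖ := by
    intro y
    have h1 : ‖S y‖ ^ 2 = ‖y‖ ^ 2 := by
      have : S y = y + (-(2 * y i)) • e := by simp only [hS]; module
      rw [this, norm_add_smul_single_sq]
      ring
    exact (sq_eq_sq₀ (norm_nonneg _) (norm_nonneg _)).1 h1
  have hScont : Continuous S := by fun_prop
  set K : Set (EuclideanSpace ℝ (Fin n)) := Metric.closedBall 0 d ∩ {y | 0 ≤ y i} with hKdef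
  have hKc : IsCompact K :=
    (isCompact_closedBall 0 d).inter_right (isClosed_le continuous_const (by fun_prop))
  set f : EuclideanSpace ℝ (Fin n) → ℝ := fun y => h (p + y) + (-1) * h (p + S y) +
    (-(2 * M / d ^ 2)) * (‖y‖ ^ 2 + ((n * d) * y i + (-n) * y i ^ 2)) with hf
  have hmem : ∀ y ∈ K, p + y ∈ Metric.closedBall p d ∧ p + S y ∈ Metric.closedBall p d := by
    intro y hy
    have : ‖y‖ ≤ d := by simpa using hy.1
    simp [hSnorm, this]
  have hc : ContinuousOn f K := by
    have c1 : ContinuousOn (fun y => h (p + y)) K :=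
      hcont.comp (by fun_prop) fun y hy => (hmem y hy).1
    have c2 : ContinuousOn (fun y => h (p + S y)) K :=
      hcont.comp (by fun_prop) fun y hy => (hmem y hy).2
    have c3 : Continuous fun y : EuclideanSpace ℝ (Fin n) =>
        (-(2 * M / d ^ 2)) * (‖y‖ ^ 2 + ((n * d) * y i + (-n) * y i ^ 2)) := by fun_prop
    exact (c1.add (continuousOn_const.mul c2)).add c3.continuousOn
  have hmain : ∀ y ∈ K, f y ≤ 0 := by
    refine nonpos_of_hasLap hn hKc hc fun y hy => ?_
    have hyd : ‖y‖ ≤ d := by simpa using hy.1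
    have hyi : 0 ≤ y i := hy.2
    rcases hyd.lt_or_eq with hlt | heq
    · rcases hyi.lt_or_eq with hpos | hzero
      · right
        refine ⟨?_, ?_⟩
        · have o1 : Metric.ball (0 : EuclideanSpace ℝ (Fin n)) d ∈ 𝓝 y :=
            Metric.isOpen_ball.mem_nhds (by simpa using hlt)
          have o2 : {z : EuclideanSpace ℝ (Fin n) | 0 < z i} ∈ 𝓝 y :=
            (isOpen_lt continuous_const (by fun_prop)).mem_nhds hpos
          filter_upwards [o1, o2] with z h1 h2
          exact ⟨Metric.ball_subset_closedBall h1, le_of_lt h2⟩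
        · have l1 : HasLap (fun y => h (p + y)) y 0 :=
            (hlap (p + y) (by simpa using hlt)).translate
          have l2 : HasLap (fun y => h (p + S y)) y 0 :=
            HasLap.reflect (f := fun y => h (p + y)) i
              ((hlap (p + S y) (by simpa [hSnorm] using hlt)).translate)
          have l3 := (l1.add (l2.const_mul (-1))).add
            ((HasLap.norm_sq.add (HasLap.coord_quadratic (x := y) i (n * d) (-n))).const_mul
              (-(2 * M / d ^ 2)))
          convert l3 using 1
          ring
      · left
        have hSy : S y = y := by simp [hS, ← hzero]
        simp only [hf, hSy, ← hzero]
        have : 0 ≤ 2 * M / d ^ 2 * ‖y‖ ^ 2 := by positivity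
        nlinarith
    · left
      have a1 := (abs_le.1 (hM _ (hmem y hy).1)).2
      have a2 := (abs_le.1 (hM _ (hmem y hy).2)).1
      have hyi' : y i ≤ d := by
        have := PiLp.norm_apply_le y i
        rw [heq] at this
        exact (le_abs_self _).trans this
      have e1 : 2 * M / d ^ 2 * (d ^ 2 + ((n * d) * y i + (-n) * y i ^ 2))
          = 2 * M + 2 * M / d ^ 2 * (n * (y i * (d - y i))) := by
        field_simp
        ring
      have e2 : 0 ≤ 2 * M / d ^ 2 * (n * (y i * (d - y i))) := by
        have : 0 ≤ d - y i := by linarith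
        positivity
      simp only [hf, heq]
      linarith
  -- The odd part of the slice at `p` has slope `2 D` at `0`.
  have hD' : HasDerivAt (fun t : ℝ => h (p + t • e) - h (p + (-t) • e)) (2 * D) 0 := by
    have h0 : HasDerivAt (fun t : ℝ => h (p + t • e)) D (-0) := by simpa using hD
    have h1 := h0.scomp (0 : ℝ) (hasDerivAt_neg 0)
    have h2 := hD.sub h1
    exact h2.congr_deriv (by rw [neg_one_smul]; ring)
  have hlim := hD'.tendsto_slope_zero_right
  have hfin : 2 * D ≤ 2 * (n * M / d) := by
    refine le_of_tendsto hlim ?_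
    filter_upwards [Ioo_mem_nhdsGT hd] with t ht
    have htK : t • e ∈ K := by
      refine ⟨?_, ?_⟩
      · simp [he, norm_smul, abs_of_pos ht.1, ht.2.le]
      · simp [he, ht.1.le]
    have h1 := hmain _ htK
    have hSt : S (t • e) = (-t) • e := by
      simp only [hS, he, PiLp.smul_apply, PiLp.single_apply, if_true, smul_eq_mul,
        mul_one]
      module
    have hti : (t • e) i = t := by simp [he]
    have htn : ‖t • e‖ = t := by simp [he, norm_smul, abs_of_pos ht.1]
    simp only [hf, hSt, hti, htn] at h1
    have e1 : 2 * M / d ^ 2 * (t ^ 2 + (n * d * t + -n * t ^ 2))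
        = 2 * (n * M / d) * t - 2 * M / d ^ 2 * ((n - 1) * t ^ 2) := by
      field_simp
      ring
    have e2 : 0 ≤ 2 * M / d ^ 2 * ((n - 1) * t ^ 2) := by
      have : (0 : ℝ) ≤ n - 1 := by linarith
      positivity
    simp only [zero_add, zero_smul, neg_zero, sub_self, sub_zero, smul_eq_mul]
    rw [inv_mul_le_iff₀ ht.1]
    linarith
  linarith

/-! ### Comparison with the fundamental solution -/

/-- The fundamental solution `‖x‖ ^ (2 - n)`, written as a power of `‖x‖ ^ 2`, is harmonic. -/
lemma HasLap.fundamental {n : ℕ} {x : EuclideanSpace ℝ (Fin n)} (hx : x ≠ 0) :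
    HasLap (fun y => (‖y‖ ^ 2) ^ ((2 - n : ℝ) / 2)) x 0 := by
  set m : ℝ := (2 - n : ℝ) / 2 with hm
  have hq0 : 0 < ‖x‖ ^ 2 := by positivity
  refine ⟨fun i => 2 * m * (‖x‖ ^ 2) ^ (m - 1) +
    2 * x i * m * ((2 * x i) * (m - 1) * (‖x‖ ^ 2) ^ (m - 1 - 1)), fun i => ?_, ?_⟩
  · simp only [HasD2, norm_add_smul_single_sq]
    set q : ℝ → ℝ := fun t => ‖x‖ ^ 2 + 2 * x i * t + t ^ 2 with hq
    have hqd : ∀ t, HasDerivAt q (2 * x i + 2 * t) t := by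
      intro t
      have := (((hasDerivAt_id t).const_mul (2 * x i)).const_add (‖x‖ ^ 2)).add
        ((hasDerivAt_id t).pow 2)
      exact this.congr_deriv (by norm_num)
    have hqz : q 0 = ‖x‖ ^ 2 := by simp [hq]
    have hqpos : ∀ᶠ t in 𝓝 (0 : ℝ), 0 < q t :=
      (hqd 0).continuousAt.eventually (lt_mem_nhds (by rw [hqz]; exact hq0))
    refine ⟨fun t => (2 * x i + 2 * t) * m * q t ^ (m - 1), ?_, ?_⟩
    · filter_upwards [hqpos] with t ht
      exact (hqd t).rpow_const (Or.inl ht.ne')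
    · have h1 : HasDerivAt (fun t : ℝ => (2 * x i + 2 * t) * m) (2 * m) 0 := by
        simpa using (((hasDerivAt_id (0 : ℝ)).const_mul 2).const_add (2 * x i)).mul_const m
      have h2 := (hqd 0).rpow_const (p := m - 1) (Or.inl (by rw [hqz]; exact hq0.ne'))
      have h3 := h1.mul h2
      exact h3.congr_deriv (by simp [hqz])
  · have hsum : ∑ i, x i ^ 2 = ‖x‖ ^ 2 := (EuclideanSpace.real_norm_sq_eq x).symm
    have hpow : (‖x‖ ^ 2) ^ (m - 1) = ‖x‖ ^ 2 * (‖x‖ ^ 2) ^ (m - 1 - 1) := by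
      rw [mul_comm, ← Real.rpow_add_one hq0.ne']
      ring_nf
    have e : ∀ i, 2 * x i * m * ((2 * x i) * (m - 1) * (‖x‖ ^ 2) ^ (m - 1 - 1))
        = (4 * m * (m - 1) * (‖x‖ ^ 2) ^ (m - 1 - 1)) * x i ^ 2 := fun i => by ring
    simp only [e]
    rw [Finset.sum_add_distrib, ← Finset.mul_sum Finset.univ (fun i => x i ^ 2), hsum, hpow]
    simp only [Finset.sum_const, Finset.card_univ, Fintype.card_fin, nsmul_eq_mul]
    have : (n : ℝ) = 2 - 2 * m := by rw [hm]; ring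
    rw [this]
    ring

/-- Comparison with the fundamental solution on `{r ≤ ‖x‖}` for a harmonic function that is
asymptotically nonpositive. -/
lemma le_fundamental {n : ℕ} (hn : 0 < n) {h : EuclideanSpace ℝ (Fin n) → ℝ} {r A : ℝ}
    (hr : 0 < r) (hA : 0 ≤ A)
    (hcont : ContinuousOn h {x | r ≤ ‖x‖})
    (hlap : ∀ x, r < ‖x‖ → HasLap h x 0)
    (hbd : ∀ x, ‖x‖ = r → h x ≤ A)
    (hlim : ∀ ε > 0, ∃ ρ, ∀ x, ρ ≤ ‖x‖ → h x ≤ ε) :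
    ∀ x, r ≤ ‖x‖ →
      h x ≤ A / (r ^ 2) ^ ((2 - n : ℝ) / 2) * (‖x‖ ^ 2) ^ ((2 - n : ℝ) / 2) := by
  intro x hx
  set m : ℝ := (2 - n : ℝ) / 2 with hm
  have hrm : 0 < (r ^ 2) ^ m := by positivity
  refine le_of_forall_pos_le_add fun ε hε => ?_
  obtain ⟨ρ₀, hρ₀⟩ := hlim ε hε
  set ρ := max ρ₀ ‖x‖ with hρ
  set K : Set (EuclideanSpace ℝ (Fin n)) := Metric.closedBall 0 ρ ∩ {y | r ≤ ‖y‖} with hK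
  have hKc : IsCompact K :=
    (isCompact_closedBall 0 ρ).inter_right (isClosed_le continuous_const (by fun_prop))
  have hne : ∀ y ∈ K, ‖y‖ ^ 2 ≠ 0 := fun y hy => by
    have : 0 < ‖y‖ := hr.trans_le hy.2
    positivity
  have hcontG : ContinuousOn (fun y : EuclideanSpace ℝ (Fin n) => (‖y‖ ^ 2) ^ m) K :=
    ContinuousOn.rpow_const (by fun_prop) fun y hy => Or.inl (hne y hy)
  have key := nonpos_of_hasLap (f := fun y => (h y + (-(A / (r ^ 2) ^ m)) * (‖y‖ ^ 2) ^ m) + (-ε))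
    hn hKc (((hcont.mono inter_subset_right).add (continuousOn_const.mul hcontG)).add
      continuousOn_const) ?_ x ⟨by simp [hρ], hx⟩
  · linarith
  · intro y hy
    have hyρ : ‖y‖ ≤ ρ := by simpa using hy.1
    have hyr : r ≤ ‖y‖ := hy.2
    rcases hyr.lt_or_eq with hlt | heq
    · rcases hyρ.lt_or_eq with hlt' | heq'
      · right
        refine ⟨?_, ?_⟩
        · have o1 : Metric.ball (0 : EuclideanSpace ℝ (Fin n)) ρ ∈ 𝓝 y :=
            Metric.isOpen_ball.mem_nhds (by simpa using hlt')
          have o2 : {z : EuclideanSpace ℝ (Fin n) | r < ‖z‖} ∈ 𝓝 y :=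
            (isOpen_lt continuous_const (by fun_prop)).mem_nhds hlt
          filter_upwards [o1, o2] with z h1 h2
          exact ⟨Metric.ball_subset_closedBall h1, le_of_lt h2⟩
        · have hy0 : y ≠ 0 := by
            rintro rfl
            simp at hlt
            linarith
          have := ((hlap y hlt).add
            ((HasLap.fundamental hy0).const_mul (-(A / (r ^ 2) ^ m)))).add (HasLap.const (-ε))
          simpa using this
      · left
        have h1 := hρ₀ y (by rw [heq']; exact le_max_left _ _)
        have : 0 ≤ A / (r ^ 2) ^ m * (‖y‖ ^ 2) ^ m := by positivity
        linarith
    · left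
      have h1 := hbd y heq.symm
      rw [← heq]
      have : A / (r ^ 2) ^ m * (r ^ 2) ^ m = A := div_mul_cancel₀ _ hrm.ne'
      linarith

/-! ### The limit at infinity -/

section Limit

variable {n : ℕ} {ψ : EuclideanSpace ℝ (Fin n) → ℝ}
  {G : EuclideanSpace ℝ (Fin n) → EuclideanSpace ℝ (Fin n)} {R C σ : ℝ}

lemma radial_bound (hR : 0 < R) (hC : 0 < C) (hσ : 0 < σ)
    (hG : ∀ x, R < ‖x‖ → HasFDerivAt ψ (innerSL ℝ (G x)) x)
    (hdec : ∀ x, R < ‖x‖ → ‖G x‖ ≤ C * ‖x‖ ^ (-(1 + σ)))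
    {x : EuclideanSpace ℝ (Fin n)} (hx : R < ‖x‖) {s : ℝ} (hs : 1 ≤ s) :
    |ψ (s • x) - ψ x| ≤ C / σ * ‖x‖ ^ (-σ) := by
  have hx0 : 0 < ‖x‖ := hR.trans hx
  have hbig : ∀ t : ℝ, 1 ≤ t → R < ‖t • x‖ := by
    intro t ht
    rw [norm_smul, Real.norm_of_nonneg (by linarith)]
    nlinarith
  have hder : ∀ t : ℝ, 1 ≤ t →
      HasDerivAt (fun t : ℝ => ψ (t • x) - ψ x) (inner ℝ (G (t • x)) x) t := by
    intro t ht
    have h1 : HasDerivAt (fun t : ℝ => t • x) x t := by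
      simpa using (hasDerivAt_id t).smul_const x
    simpa using ((hG _ (hbig t ht)).comp_hasDerivAt t h1).sub_const (ψ x)
  have hB : ∀ t : ℝ, 1 ≤ t → HasDerivAt (fun t : ℝ => C / σ * ‖x‖ ^ (-σ) * (1 - t ^ (-σ)))
      (C * ‖x‖ ^ (-σ) * t ^ (-σ - 1)) t := by
    intro t ht
    have h1 := ((Real.hasDerivAt_rpow_const (x := t) (p := -σ)
      (Or.inl (by linarith))).const_sub 1).const_mul (C / σ * ‖x‖ ^ (-σ))
    exact h1.congr_deriv (by field_simp)
  have := image_norm_le_of_norm_deriv_right_le_deriv_boundary' (a := 1) (b := s)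
    (f := fun t : ℝ => ψ (t • x) - ψ x) (f' := fun t => inner ℝ (G (t • x)) x)
    (B := fun t : ℝ => C / σ * ‖x‖ ^ (-σ) * (1 - t ^ (-σ)))
    (B' := fun t => C * ‖x‖ ^ (-σ) * t ^ (-σ - 1))
    (fun t ht => (hder t ht.1).continuousAt.continuousWithinAt)
    (fun t ht => (hder t ht.1).hasDerivWithinAt) (by simp)
    (fun t ht => (hB t ht.1).continuousAt.continuousWithinAt)
    (fun t ht => (hB t ht.1).hasDerivWithinAt) ?_ (x := s) ⟨hs, le_rfl⟩
  · refine (this : |ψ (s • x) - ψ x| ≤ _).trans ?_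
    have h1 : 0 ≤ s ^ (-σ) := by positivity
    have h2 : 0 ≤ C / σ * ‖x‖ ^ (-σ) := by positivity
    nlinarith
  · intro t ht
    have ht0 : 0 < t := by linarith [ht.1]
    refine (norm_inner_le_norm _ _).trans ?_
    have h1 := hdec _ (hbig t ht.1)
    rw [norm_smul, Real.norm_of_nonneg ht0.le, Real.mul_rpow ht0.le hx0.le] at h1
    have h2 : ‖x‖ ^ (-σ) = ‖x‖ ^ (-(1 + σ)) * ‖x‖ := by
      rw [← Real.rpow_add_one hx0.ne']; ring_nf
    have h3 : t ^ (-σ - 1) = t ^ (-(1 + σ)) := by ring_nf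
    rw [h2, h3]
    calc ‖G (t • x)‖ * ‖x‖ ≤ C * (t ^ (-(1 + σ)) * ‖x‖ ^ (-(1 + σ))) * ‖x‖ := by gcongr
      _ = _ := by ring

/-- Two points of a sphere at an angle of at most `π / 2` are joined by a segment that stays
at distance at least half the radius from the origin. -/
lemma chord_bound (hR : 0 < R) (hC : 0 < C) (hσ : 0 < σ)
    (hG : ∀ x, R < ‖x‖ → HasFDerivAt ψ (innerSL ℝ (G x)) x)
    (hdec : ∀ x, R < ‖x‖ → ‖G x‖ ≤ C * ‖x‖ ^ (-(1 + σ)))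
    {x z : EuclideanSpace ℝ (Fin n)} {r : ℝ} (hr : 2 * R ≤ r) (hx : ‖x‖ = r) (hz : ‖z‖ = r)
    (hxz : 0 ≤ inner ℝ x z) :
    |ψ z - ψ x| ≤ 4 * C * (2 ^ σ) * r ^ (-σ) := by
  have hr0 : 0 < r := by linarith
  have hseg : ∀ y ∈ segment ℝ x z, r / 2 < ‖y‖ := by
    rintro y ⟨a, b, ha, hb, hab, rfl⟩
    have h1 : ‖a • x + b • z‖ ^ 2 = a ^ 2 * r ^ 2 + 2 * (a * b * inner ℝ x z) + b ^ 2 * r ^ 2 := by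
      rw [norm_add_sq_real, norm_smul, norm_smul, real_inner_smul_left, real_inner_smul_right,
        hx, hz, Real.norm_of_nonneg ha, Real.norm_of_nonneg hb]
      ring
    have h2 : 0 ≤ a * b * inner ℝ x z := by positivity
    have h3 : 1 / 2 ≤ a ^ 2 + b ^ 2 := by nlinarith [sq_nonneg (a - b)]
    refine lt_of_pow_lt_pow_left₀ 2 (norm_nonneg _) ?_
    nlinarith [mul_le_mul_of_nonneg_right h3 (sq_nonneg r), pow_pos hr0 2]
  have hd : ∀ y ∈ segment ℝ x z,
      HasFDerivWithinAt ψ (innerSL ℝ (G y)) (segment ℝ x z) y := fun y hy =>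
    (hG y (by linarith [hseg y hy])).hasFDerivWithinAt
  have hb : ∀ y ∈ segment ℝ x z, ‖innerSL ℝ (G y)‖ ≤ C * (r / 2) ^ (-(1 + σ)) := by
    intro y hy
    rw [innerSL_apply_norm]
    refine (hdec y (by linarith [hseg y hy])).trans ?_
    exact mul_le_mul_of_nonneg_left
      (Real.rpow_le_rpow_of_nonpos (by positivity) (hseg y hy).le (by linarith)) hC.le
  have := (convex_segment x z).norm_image_sub_le_of_norm_hasFDerivWithin_le hd hb
    (left_mem_segment ℝ x z) (right_mem_segment ℝ x z)
  refine (this : |ψ z - ψ x| ≤ _).trans ?_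
  have h1 : ‖z - x‖ ≤ 2 * r := by
    refine (norm_sub_le z x).trans ?_
    rw [hx, hz]; linarith
  have h2 : (r / 2) ^ (-(1 + σ)) * (2 * r) = 4 * 2 ^ σ * r ^ (-σ) := by
    have e1 : (r / 2) ^ (-(1 + σ)) * (r / 2) = (r / 2) ^ (-σ) := by
      rw [← Real.rpow_add_one (by positivity)]; ring_nf
    have e2 : (r / 2) ^ (-σ) = r ^ (-σ) * 2 ^ σ := by
      rw [Real.div_rpow hr0.le (by norm_num), Real.rpow_neg (by norm_num : (0 : ℝ) ≤ 2), div_inv_eq_mul]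
    calc _ = 4 * ((r / 2) ^ (-(1 + σ)) * (r / 2)) := by ring
      _ = _ := by rw [e1, e2]; ring
  calc C * (r / 2) ^ (-(1 + σ)) * ‖z - x‖ ≤ C * (r / 2) ^ (-(1 + σ)) * (2 * r) := by gcongr
    _ = C * ((r / 2) ^ (-(1 + σ)) * (2 * r)) := by ring
    _ = _ := by rw [h2]; ring

/-- A function whose gradient is `O(‖x‖ ^ (-1 - σ))` has a limit at infinity, approached at rate
`O(‖x‖ ^ (-σ))`. -/
lemma exists_limit (hn : 2 ≤ n) (hR : 0 < R) (hC : 0 < C) (hσ : 0 < σ)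
    (hG : ∀ x, R < ‖x‖ → HasFDerivAt ψ (innerSL ℝ (G x)) x)
    (hdec : ∀ x, R < ‖x‖ → ‖G x‖ ≤ C * ‖x‖ ^ (-(1 + σ))) :
    ∃ c K : ℝ, 0 < K ∧ ∀ x, 2 * R ≤ ‖x‖ → |ψ x - c| ≤ K * ‖x‖ ^ (-σ) := by
  set e₁ : EuclideanSpace ℝ (Fin n) := EuclideanSpace.single ⟨0, by omega⟩ 1 with he₁
  set e₂ : EuclideanSpace ℝ (Fin n) := EuclideanSpace.single ⟨1, by omega⟩ 1 with he₂
  have n1 : ‖e₁‖ = 1 := by simp [he₁]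
  have n2 : ‖e₂‖ = 1 := by simp [he₂]
  have h12 : inner ℝ e₁ e₂ = 0 := by simp [he₁, he₂, EuclideanSpace.inner_single_left]
  -- Any point of the sphere of radius `r` is two chords away from `r • e₂`, via `r • e₁` or
  -- `-r • e₁`.
  have hsph : ∀ x, 2 * R ≤ ‖x‖ → |ψ x - ψ (‖x‖ • e₂)| ≤ 8 * C * 2 ^ σ * ‖x‖ ^ (-σ) := by
    intro x hx
    have hnx : ‖‖x‖ • e₂‖ = ‖x‖ := by simp [norm_smul, n2]
    have step : ∀ δ : ℝ, |δ| = 1 → 0 ≤ inner ℝ ((δ * ‖x‖) • e₁) x →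
        |ψ x - ψ (‖x‖ • e₂)| ≤ 8 * C * 2 ^ σ * ‖x‖ ^ (-σ) := by
      intro δ hδ hin
      have hw : ‖(δ * ‖x‖) • e₁‖ = ‖x‖ := by simp [norm_smul, n1, hδ]
      have b1 := chord_bound hR hC hσ hG hdec hx hw rfl hin
      have b2 := chord_bound hR hC hσ hG hdec hx hnx hw (by
        rw [real_inner_smul_left, real_inner_smul_right, real_inner_comm, h12]; simp)
      have := abs_sub_le (ψ x) (ψ ((δ * ‖x‖) • e₁)) (ψ (‖x‖ • e₂))
      linarith
    rcases le_total 0 (inner ℝ e₁ x) with hi | hi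
    · exact step 1 (by simp) (by rw [real_inner_smul_left]; positivity)
    · refine step (-1) (by simp) ?_
      rw [real_inner_smul_left]
      nlinarith [norm_nonneg x]
  have hray : ∀ r s : ℝ, 2 * R ≤ r → r ≤ s →
      |ψ (s • e₂) - ψ (r • e₂)| ≤ C / σ * r ^ (-σ) := by
    intro r s hr hs
    have hr0 : 0 < r := by linarith
    have hnr : ‖r • e₂‖ = r := by simp [norm_smul, n2, hr0.le]
    have := radial_bound hR hC hσ hG hdec (x := r • e₂) (by rw [hnr]; linarith)
      (s := s / r) ((one_le_div hr0).2 hs)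
    rwa [hnr, smul_smul, div_mul_cancel₀ _ hr0.ne'] at this
  have hpow : Tendsto (fun r : ℝ => C / σ * r ^ (-σ)) atTop (𝓝 0) := by
    simpa using (tendsto_rpow_neg_atTop hσ).const_mul (C / σ)
  have hcauchy : CauchySeq fun r : ℝ => ψ (r • e₂) := by
    refine Metric.cauchySeq_iff'.2 fun ε hε => ?_
    obtain ⟨N, hN1, hN2⟩ := ((eventually_ge_atTop (2 * R)).and (hpow.eventually (gt_mem_nhds hε))).exists
    exact ⟨N, fun s hs => (hray N s hN1 hs).trans_lt hN2⟩
  obtain ⟨c, hc⟩ := cauchySeq_tendsto_of_complete hcauchy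
  refine ⟨c, 8 * C * 2 ^ σ + C / σ, by positivity, fun x hx => ?_⟩
  have hlim : |c - ψ (‖x‖ • e₂)| ≤ C / σ * ‖x‖ ^ (-σ) := by
    refine le_of_tendsto ((hc.sub_const _).abs) ?_
    filter_upwards [eventually_ge_atTop ‖x‖] with s hs using hray _ s hx hs
  have h1 := abs_sub_le (ψ x) (ψ (‖x‖ • e₂)) c
  rw [abs_sub_comm (ψ (‖x‖ • e₂)) c] at h1
  have := hsph x hx
  linarith

end Limit

/-! ### Decay of the gradient -/

/-- For a function of class `C²` at `x`, the sum of the `pdd f i i x` is the Laplacian in the sense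
of slices. -/
lemma hasLap_of_contDiffAt {n : ℕ} {f : EuclideanSpace ℝ (Fin n) → ℝ}
    {x : EuclideanSpace ℝ (Fin n)} (hf : ContDiffAt ℝ 2 f x) : HasLap f x (∑ i, pdd f i i x) := by
  refine ⟨fun i => pdd f i i x, fun i => ?_, rfl⟩
  set e : EuclideanSpace ℝ (Fin n) := EuclideanSpace.single i 1 with he
  have hcoord : ∀ y, gradient f y i = fderiv ℝ f y e := by
    intro y
    have h1 : inner ℝ (gradient f y) e = fderiv ℝ f y e := by
      rw [gradient, InnerProductSpace.toDual_symm_apply]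
    rw [← h1, he, EuclideanSpace.inner_single_right]
    simp
  have hline : ∀ t : ℝ, HasDerivAt (fun s : ℝ => x + s • e) e t := fun t => by
    simpa using ((hasDerivAt_id t).smul_const e).const_add x
  have htend : Tendsto (fun s : ℝ => x + s • e) (𝓝 0) (𝓝 x) := by
    simpa using (hline 0).continuousAt.tendsto
  refine ⟨fun t => gradient f (x + t • e) i, ?_, ?_⟩
  · have hev : ∀ᶠ y in 𝓝 x, DifferentiableAt ℝ f y :=
      (hf.eventually (by simp)).mono fun y hy => hy.differentiableAt (by simp)
    filter_upwards [htend.eventually hev] with t ht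
    rw [hcoord]
    exact ht.hasFDerivAt.comp_hasDerivAt t (hline t)
  · have hd : DifferentiableAt ℝ (fun y => gradient f y i) x := by
      simp only [hcoord]
      have : DifferentiableAt ℝ (fderiv ℝ f) x :=
        (hf.fderiv_right (m := 1) (by norm_num)).differentiableAt (by simp)
      exact this.clm_apply (differentiableAt_const e)
    have h0 : HasFDerivAt (fun y => gradient f y i) (fderiv ℝ (fun y => gradient f y i) x)
        (x + (0 : ℝ) • e) := by simpa using hd.hasFDerivAt
    exact h0.comp_hasDerivAt (0 : ℝ) (hline 0)

/-- **Airfoil far field flow (incompressible):** if `φ` is harmonic in the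
exterior domain `{|x| ≥ R}` and `|∇φ - u∞| ≤ C |x|^(-1-σ)`, then
`|∇φ - u∞| ≤ C₀ |x|^(-n+1)` on `{|x| ≥ R'}` for some `R' ≥ R`. -/
theorem stmt10 (n : ℕ) (hn : 3 ≤ n) (R : ℝ) (hR : 0 < R)
    (φ : EuclideanSpace ℝ (Fin n) → ℝ)
    (hφ : ContDiffOn ℝ 2 φ {x | R ≤ ‖x‖})
    (harm : ∀ x : EuclideanSpace ℝ (Fin n), R ≤ ‖x‖ → ∑ i, pdd φ i i x = 0)
    (uinf : EuclideanSpace ℝ (Fin n)) (C σ : ℝ) (hC : 0 < C) (hσ : 0 < σ)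
    (hdecay : ∀ x : EuclideanSpace ℝ (Fin n), R ≤ ‖x‖ →
      ‖gradient φ x - uinf‖ ≤ C * ‖x‖ ^ (-(1 + σ))) :
    ∃ R' ≥ R, ∃ C₀ > 0, ∀ x : EuclideanSpace ℝ (Fin n), R' ≤ ‖x‖ →
      ‖gradient φ x - uinf‖ ≤ C₀ * ‖x‖ ^ (-(n : ℝ) + 1) := by
  have hn0 : 0 < n := by omega
  have hcd : ∀ x, R < ‖x‖ → ContDiffAt ℝ 2 φ x := fun x hx =>
    hφ.contDiffAt (Filter.mem_of_superset
      ((isOpen_lt continuous_const continuous_norm).mem_nhds hx) fun y (hy : R < ‖y‖) => hy.le)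
  set G : EuclideanSpace ℝ (Fin n) → EuclideanSpace ℝ (Fin n) := fun x => gradient φ x - uinf with hGdef
  set ψ : EuclideanSpace ℝ (Fin n) → ℝ := fun x => φ x + (-1) * inner ℝ uinf x with hψ
  have hG : ∀ x, R < ‖x‖ → HasFDerivAt ψ (innerSL ℝ (G x)) x := by
    intro x hx
    have h1 : HasFDerivAt φ (innerSL ℝ (gradient φ x)) x :=
      hasGradientAt_iff_hasFDerivAt.1 ((hcd x hx).differentiableAt (by simp)).hasGradientAt
    have h2 := h1.add (((innerSL ℝ uinf).hasFDerivAt (x := x)).const_mul (-1))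
    refine h2.congr_fderiv (ContinuousLinearMap.ext fun v => ?_)
    simp [hGdef, sub_eq_add_neg]
  obtain ⟨c, K, hK, hlimit⟩ := exists_limit (by omega) hR hC hσ hG fun x hx => hdecay x hx.le
  set h : EuclideanSpace ℝ (Fin n) → ℝ := fun x => ψ x + (-c) with hh
  have hGh : ∀ x, R < ‖x‖ → HasFDerivAt h (innerSL ℝ (G x)) x := fun x hx =>
    (hG x hx).add_const (-c)
  have hlap : ∀ x, R < ‖x‖ → HasLap h x 0 := by
    intro x hx
    have h1 := hasLap_of_contDiffAt (hcd x hx)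
    rw [harm x hx.le] at h1
    have h2 : HasLap (fun y => inner ℝ uinf y) x 0 := by
      refine ⟨fun i => 2 * 0, fun i => HasD2.of_quadratic (inner ℝ uinf x)
        (inner ℝ uinf (EuclideanSpace.single i 1)) 0 fun t => ?_, by simp⟩
      rw [inner_add_right, real_inner_smul_right]
      ring
    have h3 := (h1.add (h2.const_mul (-1))).add (HasLap.const (-c))
    rwa [mul_zero, add_zero, add_zero] at h3
  have hcont : ∀ s : Set (EuclideanSpace ℝ (Fin n)), (∀ x ∈ s, R < ‖x‖) → ContinuousOn h s :=
    fun s hs x hx => (hGh x (hs x hx)).continuousAt.continuousWithinAt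
  have habs : ∀ x, 2 * R ≤ ‖x‖ → |h x| ≤ K * ‖x‖ ^ (-σ) := by
    intro x hx
    simpa [hh, sub_eq_add_neg] using hlimit x hx
  set A : ℝ := K * (2 * R) ^ (-σ) with hA
  have hA0 : 0 < A := by positivity
  have hlim0 : ∀ ε > 0, ∃ ρ : ℝ, ∀ x, ρ ≤ ‖x‖ → |h x| ≤ ε := by
    intro ε hε
    have ht : Tendsto (fun r : ℝ => K * r ^ (-σ)) atTop (𝓝 0) := by
      simpa using (tendsto_rpow_neg_atTop hσ).const_mul K
    obtain ⟨ρ, hρ⟩ := eventually_atTop.1 (ht.eventually (gt_mem_nhds hε))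
    exact ⟨max ρ (2 * R), fun x hx =>
      (habs x ((le_max_right _ _).trans hx)).trans (hρ _ ((le_max_left _ _).trans hx)).le⟩
  set m : ℝ := (2 - n : ℝ) / 2 with hm
  set B : ℝ := A / ((2 * R) ^ 2) ^ m with hB
  have hB0 : 0 < B := by positivity
  have h2R : ∀ x : EuclideanSpace ℝ (Fin n), 2 * R ≤ ‖x‖ → R < ‖x‖ := fun x hx => by linarith
  have hbound : ∀ x, 2 * R ≤ ‖x‖ → |h x| ≤ B * (‖x‖ ^ 2) ^ m := by
    intro x hx
    have hup := le_fundamental hn0 (r := 2 * R) (by positivity) hA0.le (hcont _ h2R)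
      (fun x hx => hlap x (h2R x hx.le))
      (fun x hx => (le_abs_self _).trans ((habs x hx.ge).trans_eq (by rw [hx])))
      (fun ε hε => (hlim0 ε hε).imp fun ρ hρ x hx => (le_abs_self _).trans (hρ x hx)) x hx
    have hlo := le_fundamental hn0 (h := fun x => -1 * h x) (r := 2 * R) (by positivity) hA0.le
      (continuousOn_const.mul (hcont _ h2R))
      (fun x hx => by simpa using (hlap x (h2R x hx.le)).const_mul (-1))
      (fun x hx => by
        have := neg_abs_le (h x)
        have := (habs x hx.ge).trans_eq (by rw [hx])
        linarith)
      (fun ε hε => (hlim0 ε hε).imp fun ρ hρ x hx => by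
        have := neg_abs_le (h x)
        have := hρ x hx
        linarith) x hx
    exact abs_le.2 ⟨by linarith, hup⟩
  refine ⟨4 * R, by linarith, n * (n * (B * ((2⁻¹ : ℝ) ^ 2) ^ m) * 2), by positivity, fun x hx => ?_⟩
  have hx0 : 0 < ‖x‖ := by linarith
  -- The gradient estimate is applied on the ball of radius `d = ‖x‖ / 2` about `x`.
  set d : ℝ := ‖x‖ / 2 with hd
  have hd0 : 0 < d := by positivity
  have hball : ∀ y ∈ Metric.closedBall x d, d ≤ ‖y‖ := by
    intro y hy
    rw [mem_closedBall_iff_norm'] at hy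
    have := norm_sub_norm_le x y
    linarith
  have hball2 : ∀ y ∈ Metric.closedBall x d, 2 * R ≤ ‖y‖ := fun y hy => by
    linarith [hball y hy]
  set M : ℝ := B * (d ^ 2) ^ m with hM
  have hm0 : m ≤ 0 := by
    have : (3 : ℝ) ≤ n := by exact_mod_cast hn
    rw [hm]; linarith
  have hMb : ∀ y ∈ Metric.closedBall x d, |h y| ≤ M := by
    intro y hy
    refine (hbound y (hball2 y hy)).trans (mul_le_mul_of_nonneg_left ?_ hB0.le)
    exact Real.rpow_le_rpow_of_nonpos (by positivity)
      (pow_le_pow_left₀ hd0.le (hball y hy) 2) hm0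
  have hcoord : ∀ i, |G x i| ≤ n * M / d := by
    intro i
    have hD : HasDerivAt (fun t : ℝ => h (x + t • EuclideanSpace.single i 1)) (G x i) 0 := by
      have h0 : HasFDerivAt h (innerSL ℝ (G x)) (x + (0 : ℝ) • EuclideanSpace.single i (1 : ℝ)) := by
        simpa using hGh x (by linarith)
      have hl : HasDerivAt (fun s : ℝ => x + s • EuclideanSpace.single i (1 : ℝ))
          (EuclideanSpace.single i (1 : ℝ)) 0 := by
        simpa using ((hasDerivAt_id (0 : ℝ)).smul_const
          (EuclideanSpace.single i (1 : ℝ))).const_add x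
      have := h0.comp_hasDerivAt (0 : ℝ) hl
      simpa [EuclideanSpace.inner_single_right, Function.comp_def] using this
    have hcb := hcont _ fun y hy => h2R y (hball2 y hy)
    have hlb : ∀ y ∈ Metric.ball x d, HasLap h y 0 := fun y hy =>
      hlap y (h2R y (hball2 y (Metric.ball_subset_closedBall hy)))
    have hup := slope_le_of_harmonic hn0 hd0 i hcb hlb hMb hD
    have hlo := slope_le_of_harmonic hn0 (h := fun y => -1 * h y) hd0 i
      (continuousOn_const.mul hcb)
      (fun y hy => by simpa using (hlb y hy).const_mul (-1))
      (fun y hy => by simpa using hMb y hy) (hD.const_mul (-1))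
    exact abs_le.2 ⟨by linarith, hup⟩
  have hnorm : ‖G x‖ ≤ n * (n * M / d) := by
    have hsum : G x = ∑ i, (G x i) • EuclideanSpace.single i (1 : ℝ) := by
      ext j
      simp [Pi.single_apply]
    rw [hsum]
    refine (norm_sum_le _ _).trans
      ((Finset.sum_le_sum fun i _ => ?_).trans_eq (b := ∑ _i : Fin n, (n * M / d)) (by simp))
    simpa [norm_smul] using hcoord i
  refine hnorm.trans_eq ?_
  have hpow : (d ^ 2) ^ m = ((2⁻¹ : ℝ) ^ 2) ^ m * ‖x‖ ^ (2 - n : ℝ) := by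
    have e1 : d ^ 2 = (2⁻¹ : ℝ) ^ 2 * ‖x‖ ^ 2 := by rw [hd]; ring
    rw [e1, Real.mul_rpow (by positivity) (by positivity), ← Real.rpow_natCast ‖x‖ 2,
      ← Real.rpow_mul hx0.le]
    congr 2
    rw [hm]; push_cast; ring
  have hpow2 : ‖x‖ ^ (2 - n : ℝ) = ‖x‖ ^ (-(n : ℝ) + 1) * ‖x‖ := by
    rw [← Real.rpow_add_one hx0.ne']; ring_nf
  rw [hM, hpow, hpow2, hd]
  field_simp
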